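/- Let X_1,...,X_n be bounded real random variables and R ≥ max_i ‖X_i‖_∞. Then ∑_{i=1}^n H(X_i) − I_sym(X_1,...,X_n) ≤ H(X_1,...,X_n), where I_sym is defined via the limsup over N of the normalized log-volumes of permutation micro-states. -/

import Mathlib

open MeasureTheory Filter
open scoped Classical ENNReal

/-- Normalized coordinate sum `κ_N(x) = N⁻¹ ∑_j x_j`. -/
noncomputable def kappa {N : ℕ} (x : Fin N → ℝ) : ℝ := (∑ j, x j) / N

/-- The micro-state set `Δ_R(X₁,…,Xₙ;N,m,δ)`: `n`-tuples of vectors in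
`[-R,R]^N` whose normalized mixed moments up to order `m` approximate the
joint moments of `(X₁,…,Xₙ)` within `δ`. -/
noncomputable def DeltaR {Ω : Type*} [MeasurableSpace Ω] (μ : Measure Ω)
    {n : ℕ} (X : Fin n → Ω → ℝ) (R : ℝ) (N m : ℕ) (δ : ℝ) :
    Set (Fin n → Fin N → ℝ) :=
  {x | (∀ i j, |x i j| ≤ R) ∧
    ∀ k : ℕ, 1 ≤ k → k ≤ m → ∀ idx : Fin k → Fin n,
      |kappa (fun j => ∏ l, x (idx l) j) - ∫ ω, ∏ l, X (idx l) ω ∂μ| < δ}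

/-- The permutation micro-state set `Δ_{sym,R}(X₁,…,Xₙ;N,m,δ) ⊆ S_N^n`:
tuples `(σ₁,…,σₙ)` such that `(σ₁(x₁),…,σₙ(xₙ)) ∈ Δ_R` for some nondecreasing
`x₁,…,xₙ ∈ ℝ^N_≤`. -/
noncomputable def DeltaSymR {Ω : Type*} [MeasurableSpace Ω] (μ : Measure Ω)
    {n : ℕ} (X : Fin n → Ω → ℝ) (R : ℝ) (N m : ℕ) (δ : ℝ) :
    Set (Fin n → Equiv.Perm (Fin N)) :=
  {σ | ∃ x : Fin n → Fin N → ℝ, (∀ i, Monotone (x i)) ∧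
    (fun i j => x i ((σ i)⁻¹ j)) ∈ DeltaR μ X R N m δ}

/-- `(1/N) log γ_{S_N}^{⊗n}(Δ_{sym,R}(X₁,…,Xₙ;N,m,δ))`, the normalized log of
the uniform probability of the permutation micro-states. -/
noncomputable def symQ {Ω : Type*} [MeasurableSpace Ω] (μ : Measure Ω)
    {n : ℕ} (X : Fin n → Ω → ℝ) (R : ℝ) (N m : ℕ) (δ : ℝ) : ℝ :=
  Real.log ((Nat.card (DeltaSymR μ X R N m δ) : ℝ) / (N.factorial : ℝ) ^ n) / N

/-- `(1/N) log λ_N^{⊗n}(Δ_R(X₁,…,Xₙ;N,m,δ))`, the normalized log-volume of the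
micro-states. -/
noncomputable def volQ {Ω : Type*} [MeasurableSpace Ω] (μ : Measure Ω)
    {n : ℕ} (X : Fin n → Ω → ℝ) (R : ℝ) (N m : ℕ) (δ : ℝ) : ℝ :=
  Real.log (volume (DeltaR μ X R N m δ)).toReal / N

/-- The mutual information `I_sym`, via `limsup` in `N` and the limit
(= infimum, by monotonicity) over `m → ∞`, `δ → 0+`. -/
noncomputable def Isym {Ω : Type*} [MeasurableSpace Ω] (μ : Measure Ω)
    {n : ℕ} (X : Fin n → Ω → ℝ) (R : ℝ) : EReal :=
  -(⨅ (m : ℕ) (δ : ℝ) (_ : 0 < δ),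
      Filter.limsup (fun N : ℕ => ((symQ μ X R N m δ : ℝ) : EReal)) atTop)

/-- The upper mutual information `Ī_sym`, via `liminf` in `N`. -/
noncomputable def IsymUpper {Ω : Type*} [MeasurableSpace Ω] (μ : Measure Ω)
    {n : ℕ} (X : Fin n → Ω → ℝ) (R : ℝ) : EReal :=
  -(⨅ (m : ℕ) (δ : ℝ) (_ : 0 < δ),
      Filter.liminf (fun N : ℕ => ((symQ μ X R N m δ : ℝ) : EReal)) atTop)

/-- Boltzmann–Gibbs (differential) entropy of `μ` with respect to a reference
measure `vol`, with value `⊥` (i.e. `-∞`) when `μ` has no density. -/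
noncomputable def diffEntropy {E : Type*} [MeasurableSpace E] (vol μ : Measure E) : EReal :=
  if μ ≪ vol then
    ((∫⁻ x, ENNReal.ofReal (Real.negMulLog (μ.rnDeriv vol x).toReal) ∂vol : ℝ≥0∞) : EReal)
      - ((∫⁻ x, ENNReal.ofReal (-(Real.negMulLog (μ.rnDeriv vol x).toReal)) ∂vol : ℝ≥0∞) : EReal)
  else ⊥

/-- Lemma 1.2 of the paper (assumed): the Boltzmann–Gibbs entropy is the
asymptotic normalized log-volume of the micro-state sets `Δ_R`, the limit in
`N` existing. -/
def MicrostateVolumeFormula {Ω : Type*} [MeasurableSpace Ω] (μ : Measure Ω)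
    {n : ℕ} (X : Fin n → Ω → ℝ) (R : ℝ) : Prop :=
  diffEntropy volume (Measure.map (fun ω (i : Fin n) => X i ω) μ)
      = ⨅ (m : ℕ) (δ : ℝ) (_ : 0 < δ),
          Filter.limsup (fun N : ℕ => ((volQ μ X R N m δ : ℝ) : EReal)) atTop ∧
  diffEntropy volume (Measure.map (fun ω (i : Fin n) => X i ω) μ)
      = ⨅ (m : ℕ) (δ : ℝ) (_ : 0 < δ),
          Filter.liminf (fun N : ℕ => ((volQ μ X R N m δ : ℝ) : EReal)) atTop

lemma moment_cont (R : ℝ) (f : ℝ → ℝ) (hf : Continuous f) (ε : ℝ) (hε : 0 < ε) :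
    ∃ m : ℕ, ∃ δ : ℝ, 0 < δ ∧ ∀ (N : ℕ) (x y : Fin N → ℝ), (∀ j, |x j| ≤ R) →
      (∀ j, |y j| ≤ R) →
      (∀ k : ℕ, 1 ≤ k → k ≤ m → |∑ j, x j ^ k - ∑ j, y j ^ k| ≤ δ * N) →
      |∑ j, f (x j) - ∑ j, f (y j)| ≤ ε * N := by
  obtain ⟨p, hp⟩ := exists_polynomial_near_of_continuousOn (-R) R f hf.continuousOn (ε / 3)
    (by positivity)
  set C : ℝ := ∑ d ∈ Finset.range (p.natDegree + 1), |p.coeff d| with hC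
  have hC0 : 0 ≤ C := Finset.sum_nonneg fun _ _ => abs_nonneg _
  refine ⟨p.natDegree, ε / 3 / (C + 1), by positivity, fun N x y hx hy hm => ?_⟩
  have key : |∑ j, p.eval (x j) - ∑ j, p.eval (y j)| ≤ ε / 3 * N := by
    have e : ∀ z : Fin N → ℝ, ∑ j, p.eval (z j)
        = ∑ d ∈ Finset.range (p.natDegree + 1), p.coeff d * ∑ j, z j ^ d := by
      intro z
      simp_rw [Polynomial.eval_eq_sum_range, Finset.mul_sum]
      rw [Finset.sum_comm]
    rw [e, e, ← Finset.sum_sub_distrib]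
    refine (Finset.abs_sum_le_sum_abs _ _).trans ?_
    have : ∀ d ∈ Finset.range (p.natDegree + 1),
        |p.coeff d * ∑ j, x j ^ d - p.coeff d * ∑ j, y j ^ d|
          ≤ |p.coeff d| * (ε / 3 / (C + 1) * N) := by
      intro d hd
      rw [← mul_sub, abs_mul]
      refine mul_le_mul_of_nonneg_left ?_ (abs_nonneg _)
      rcases Nat.eq_zero_or_pos d with rfl | h
      · simp; positivity
      · exact hm d h (by have := Finset.mem_range.1 hd; omega)
    refine (Finset.sum_le_sum this).trans ?_
    rw [← Finset.sum_mul, ← hC]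
    have : C * (ε / 3 / (C + 1) * N) = (C / (C + 1)) * (ε / 3 * N) := by field_simp
    rw [this]
    have h1 : C / (C + 1) ≤ 1 := by rw [div_le_one (by positivity)]; linarith
    exact mul_le_of_le_one_left (by positivity) h1
  have near : ∀ z : Fin N → ℝ, (∀ j, |z j| ≤ R) →
      |∑ j, p.eval (z j) - ∑ j, f (z j)| ≤ ε / 3 * N := by
    intro z hz
    rw [← Finset.sum_sub_distrib]
    refine (Finset.abs_sum_le_sum_abs _ _).trans ?_
    refine (Finset.sum_le_card_nsmul _ _ (ε / 3) fun j _ => (hp (z j) (abs_le.1 (hz j))).le).trans ?_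
    simp [mul_comm]
  have a := abs_le.1 (near x hx)
  have b := abs_le.1 (near y hy)
  have c := abs_le.1 key
  rw [abs_le]; constructor <;> linarith [a.1, a.2, b.1, b.2, c.1, c.2]

lemma card_sdiff_lower {N : ℕ} (x y : Fin N → ℝ) (hx : Monotone x) (hy : Monotone y) (s t : ℝ)
    (B : ℝ) (hB : 0 ≤ B)
    (h : ((Finset.univ.filter fun j => x j ≤ s).card : ℝ)
      - ((Finset.univ.filter fun j => y j ≤ t).card : ℝ) ≤ B) :
    ((Finset.univ.filter fun j => x j ≤ s ∧ ¬ y j ≤ t).card : ℝ) ≤ B := by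
  by_cases hne : ∃ j0, x j0 ≤ s ∧ ¬ y j0 ≤ t
  · obtain ⟨j0, h1, h2⟩ := hne
    have hsub : (Finset.univ.filter fun j => y j ≤ t) ⊆ (Finset.univ.filter fun j => x j ≤ s) := by
      intro j hj
      simp only [Finset.mem_filter, Finset.mem_univ, true_and] at hj ⊢
      rcases le_total j j0 with hle | hle
      · exact (hx hle).trans h1
      · exact absurd ((hy hle).trans hj) h2
    have e : (Finset.univ.filter fun j => x j ≤ s ∧ ¬ y j ≤ t)
        = (Finset.univ.filter fun j => x j ≤ s) \ (Finset.univ.filter fun j => y j ≤ t) := by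
      ext j; simp
    rw [e, Finset.card_sdiff_of_subset hsub, Nat.cast_sub (Finset.card_le_card hsub)]
    exact h
  · have e : (Finset.univ.filter fun j => x j ≤ s ∧ ¬ y j ≤ t) = ∅ := by
      ext j
      simp only [Finset.mem_filter, Finset.mem_univ, true_and, Finset.notMem_empty, iff_false]
      exact fun hj => hne ⟨j, hj⟩
    rw [e]; simpa using hB

lemma clip_bound (u v a h : ℝ) (hh : 0 < h) :
    |(min u (a + h) - min u a) - (min v (a + h) - min v a)|
      ≤ h * ((if u ≤ a + h ∧ ¬ v ≤ a then 1 else 0) + (if v ≤ a + h ∧ ¬ u ≤ a then 1 else 0)) := by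
  rw [abs_le]
  simp only [min_def]
  split_ifs <;> constructor <;> simp only [not_and, not_le] at * <;>
    first | linarith | (exfalso; grind)

lemma voic (R η : ℝ) (hη : 0 < η) :
    ∃ m : ℕ, ∃ δ : ℝ, 0 < δ ∧ ∀ (N : ℕ) (x y : Fin N → ℝ), Monotone x → Monotone y →
      (∀ j, |x j| ≤ R) → (∀ j, |y j| ≤ R) →
      (∀ k : ℕ, 1 ≤ k → k ≤ m → |∑ j, x j ^ k - ∑ j, y j ^ k| ≤ δ * N) →
      ∑ j, |x j - y j| ≤ η * N := by
  set h : ℝ := η / 5 with hh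
  have h0 : 0 < h := by positivity
  obtain ⟨K, hK⟩ := exists_nat_ge (2 * R / h)
  have hK' : 2 * R ≤ K * h := by rwa [div_le_iff₀ h0] at hK
  set t : ℕ → ℝ := fun k => -R + k * h with ht
  have ht1 : ∀ k, t (k + 1) = t k + h := by intro k; simp only [ht]; push_cast; ring
  set φ : ℕ → ℝ → ℝ := fun k s => max 0 (min 1 ((t (k + 1) - s) / h)) with hφ
  have hφc : ∀ k, Continuous (φ k) := by intro k; simp only [hφ]; fun_prop
  set ε : ℝ := 1 / (2 * (K + 1)) with hε
  have hε0 : 0 < ε := by positivity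
  choose m δ hδ hmδ using fun k => moment_cont R (φ k) (hφc k) ε hε0
  obtain ⟨d, hd0, hd⟩ : ∃ d : ℝ, 0 < d ∧ ∀ k ∈ Finset.range (K + 2), d ≤ δ k := by
    have hne : (Finset.range (K + 2)).Nonempty := ⟨0, by simp⟩
    refine ⟨(Finset.range (K + 2)).inf' hne δ, ?_, fun k hk => Finset.inf'_le _ hk⟩
    obtain ⟨k, _, e⟩ := Finset.exists_mem_eq_inf' hne δ
    rw [e]; exact hδ k
  refine ⟨(Finset.range (K + 2)).sup m, d, hd0, fun N x y hx hy hxR hyR hmom => ?_⟩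
  have cmp : ∀ k ∈ Finset.range (K + 2), |∑ j, φ k (x j) - ∑ j, φ k (y j)| ≤ ε * N := by
    intro k hk
    refine hmδ k N x y hxR hyR fun l hl hl' => (hmom l hl (hl'.trans (Finset.le_sup hk))).trans ?_
    exact mul_le_mul_of_nonneg_right (hd k hk) (by positivity)
  set P : (Fin N → ℝ) → ℕ → ℝ := fun z k => ((Finset.univ.filter fun j => z j ≤ t k).card : ℝ)
    with hP
  have hPs : ∀ z k, P z k = ∑ j, if z j ≤ t k then (1 : ℝ) else 0 := by
    intro z k; simp [hP]
  have lo : ∀ z k, P z k ≤ ∑ j, φ k (z j) := by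
    intro z k
    rw [hPs]
    refine Finset.sum_le_sum fun j _ => ?_
    simp only [hφ]
    split_ifs with hj
    · refine le_max_of_le_right (le_min le_rfl ?_)
      rw [le_div_iff₀ h0, ht1]; linarith
    · exact le_max_left _ _
  have hi : ∀ z k, ∑ j, φ k (z j) ≤ P z (k + 1) := by
    intro z k
    rw [hPs]
    refine Finset.sum_le_sum fun j _ => ?_
    simp only [hφ]
    split_ifs with hj
    · exact max_le zero_le_one (min_le_left _ _)
    · refine max_le le_rfl ((min_le_right _ _).trans ?_)
      apply div_nonpos_of_nonpos_of_nonneg _ h0.le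
      linarith
  have Pm : ∀ z k, P z k ≤ P z (k + 1) := fun z k => (lo z k).trans (hi z k)
  have P0 : ∀ z k, 0 ≤ P z k := fun z k => by positivity
  have PN : ∀ z k, P z k ≤ N := by
    intro z k
    have := Finset.card_filter_le (Finset.univ : Finset (Fin N)) (fun j => z j ≤ t k)
    simp only [Finset.card_univ, Fintype.card_fin] at this
    simp only [hP]; exact_mod_cast this
  have tel : ∀ z, ∑ k ∈ Finset.range K, (P z (k + 2) - P z k) ≤ 2 * N := by
    intro z
    have : ∀ k ∈ Finset.range K, P z (k + 2) - P z k
        = (P z (k + 1 + 1) + P z (k + 1)) - (P z (k + 1) + P z k) := fun k _ => by ring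
    rw [Finset.sum_congr rfl this, Finset.sum_range_sub (fun k => P z (k + 1) + P z k)]
    linarith [PN z (K + 1), PN z K, P0 z 1, P0 z 0]
  have sd : ∀ u v : Fin N → ℝ, Monotone u → Monotone v →
      (∀ k ∈ Finset.range (K + 2), |∑ j, φ k (u j) - ∑ j, φ k (v j)| ≤ ε * N) →
      ∀ k ∈ Finset.range K,
      ∑ j, (if u j ≤ t k + h ∧ ¬ v j ≤ t k then (1 : ℝ) else 0) ≤ P v (k + 2) - P v k + ε * N := by
    intro u v hu hv hc k hk
    have hk' := Finset.mem_range.1 hk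
    have c := (abs_le.1 (hc (k + 1) (Finset.mem_range.2 (by omega)))).2
    have b := card_sdiff_lower u v hu hv (t (k + 1)) (t k) (P v (k + 2) - P v k + ε * N)
      (by have := Pm v k; have := Pm v (k + 1); have : 0 ≤ ε * N := by positivity
          linarith)
      (by have := lo u (k + 1); have := hi v (k + 1); simp only [hP] at *; linarith)
    rw [ht1] at b
    simpa using b
  have point : ∀ j, |x j - y j| ≤ ∑ k ∈ Finset.range K,
      h * ((if x j ≤ t k + h ∧ ¬ y j ≤ t k then 1 else 0)
        + (if y j ≤ t k + h ∧ ¬ x j ≤ t k then 1 else 0)) := by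
    intro j
    have e : ∀ s, |s| ≤ R → ∑ k ∈ Finset.range K, (min s (t k + h) - min s (t k)) = s + R := by
      intro s hs
      have hs' := abs_le.1 hs
      simp_rw [← ht1]
      rw [Finset.sum_range_sub (fun k => min s (t k))]
      rw [min_eq_left, min_eq_right] <;> simp only [ht] <;> push_cast <;> linarith
    have : x j - y j = ∑ k ∈ Finset.range K, ((min (x j) (t k + h) - min (x j) (t k))
        - (min (y j) (t k + h) - min (y j) (t k))) := by
      rw [Finset.sum_sub_distrib, e _ (hxR j), e _ (hyR j)]; ring
    rw [this]
    exact (Finset.abs_sum_le_sum_abs _ _).trans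
      (Finset.sum_le_sum fun k _ => clip_bound _ _ _ _ h0)
  calc ∑ j, |x j - y j| ≤ ∑ j, ∑ k ∈ Finset.range K,
      h * ((if x j ≤ t k + h ∧ ¬ y j ≤ t k then 1 else 0)
        + (if y j ≤ t k + h ∧ ¬ x j ≤ t k then 1 else 0)) := Finset.sum_le_sum fun j _ => point j
    _ = ∑ k ∈ Finset.range K, h * (∑ j, (if x j ≤ t k + h ∧ ¬ y j ≤ t k then 1 else 0)
        + ∑ j, (if y j ≤ t k + h ∧ ¬ x j ≤ t k then 1 else 0)) := by
      rw [Finset.sum_comm]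
      refine Finset.sum_congr rfl fun k _ => ?_
      rw [← Finset.sum_add_distrib, Finset.mul_sum]
    _ ≤ ∑ k ∈ Finset.range K, h * ((P y (k + 2) - P y k + ε * N)
        + (P x (k + 2) - P x k + ε * N)) := by
      refine Finset.sum_le_sum fun k hk => mul_le_mul_of_nonneg_left ?_ h0.le
      refine add_le_add (sd x y hx hy cmp k hk) (sd y x hy hx (fun k hk => ?_) k hk)
      rw [abs_sub_comm]; exact cmp k hk
    _ = h * (∑ k ∈ Finset.range K, (P y (k + 2) - P y k)
        + ∑ k ∈ Finset.range K, (P x (k + 2) - P x k) + 2 * K * ε * N) := by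
      rw [← Finset.mul_sum]
      simp only [Finset.sum_add_distrib, Finset.sum_const, Finset.card_range, nsmul_eq_mul]
      ring
    _ ≤ h * (2 * N + 2 * N + 1 * N) := by
      have : 2 * K * ε ≤ 1 := by
        rw [hε, mul_one_div, div_le_one (by positivity)]; linarith
      have := mul_le_mul_of_nonneg_right this (Nat.cast_nonneg (α := ℝ) N)
      have := tel x
      have := tel y
      gcongr
    _ = η * N := by rw [hh]; ring

lemma prod_lip {ι : Type*} (s : Finset ι) (C : ℝ) (hC : 1 ≤ C) (a b : ι → ℝ)
    (ha : ∀ i, |a i| ≤ C) (hb : ∀ i, |b i| ≤ C) :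
    |∏ i ∈ s, a i - ∏ i ∈ s, b i| ≤ C ^ s.card * ∑ i ∈ s, |a i - b i| := by
  have hC0 : 0 ≤ C := by linarith
  induction s using Finset.induction_on with
  | empty => simp
  | insert i s hi ih =>
    rw [Finset.prod_insert hi, Finset.prod_insert hi, Finset.sum_insert hi,
      Finset.card_insert_of_notMem hi]
    have e : a i * ∏ x ∈ s, a x - b i * ∏ x ∈ s, b x
        = a i * (∏ x ∈ s, a x - ∏ x ∈ s, b x) + (a i - b i) * ∏ x ∈ s, b x := by ring
    rw [e]
    refine (abs_add_le _ _).trans ?_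
    rw [abs_mul, abs_mul]
    have h1 : |∏ x ∈ s, b x| ≤ C ^ s.card := by
      rw [Finset.abs_prod]
      refine (Finset.prod_le_prod (fun x _ => abs_nonneg _) fun x _ => hb x).trans ?_
      simp
    have h2 : C ^ s.card ≤ C ^ (s.card + 1) := pow_le_pow_right₀ hC (by omega)
    have h3 : |a i| * |∏ x ∈ s, a x - ∏ x ∈ s, b x|
        ≤ C * (C ^ s.card * ∑ i ∈ s, |a i - b i|) :=
      mul_le_mul (ha i) ih (abs_nonneg _) hC0
    have h4 : |a i - b i| * |∏ x ∈ s, b x| ≤ |a i - b i| * C ^ (s.card + 1) :=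
      mul_le_mul_of_nonneg_left (h1.trans h2) (abs_nonneg _)
    rw [pow_succ] at *
    linarith

lemma deltaR_nonempty_ev {Ω : Type*} [MeasurableSpace Ω] (μ : Measure Ω)
    [IsProbabilityMeasure μ] {n : ℕ} (X : Fin n → Ω → ℝ)
    (hmeas : ∀ i, Measurable (X i)) (R : ℝ)
    (hbdd : ∀ i, ∀ᵐ ω ∂μ, |X i ω| ≤ R) (m : ℕ) (δ : ℝ) (hδ : 0 < δ) :
    ∀ᶠ N in atTop, (DeltaR μ X R N m δ).Nonempty := by
  set P : Measure (ℕ → Ω) := Measure.infinitePi (fun _ : ℕ => μ) with hP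
  have hb : ∀ᵐ w ∂P, ∀ (i : Fin n) (j : ℕ), |X i (w j)| ≤ R := by
    rw [ae_all_iff]; intro i
    rw [ae_all_iff]; intro j
    exact (measurePreserving_eval_infinitePi (fun _ : ℕ => μ) j).quasiMeasurePreserving.ae (hbdd i)
  have hl : ∀ᵐ w ∂P, ∀ (k : ℕ) (idx : Fin k → Fin n),
      Tendsto (fun N : ℕ => (∑ j ∈ Finset.range N, ∏ l, X (idx l) (w j)) / N) atTop
        (nhds (∫ ω, ∏ l, X (idx l) ω ∂μ)) := by
    rw [ae_all_iff]; intro k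
    rw [ae_all_iff]; intro idx
    have mf : Measurable (fun ω => ∏ l, X (idx l) ω) :=
      Finset.measurable_prod _ fun l _ => hmeas (idx l)
    have intf : Integrable (fun ω => ∏ l, X (idx l) ω) μ := by
      refine Integrable.of_bound mf.aestronglyMeasurable (R ^ k) ?_
      have : ∀ᵐ ω ∂μ, ∀ i, |X i ω| ≤ R := by rw [ae_all_iff]; exact hbdd
      filter_upwards [this] with ω hω
      rw [Real.norm_eq_abs, Finset.abs_prod]
      refine (Finset.prod_le_prod (fun x _ => abs_nonneg _) fun x _ => hω (idx x)).trans ?_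
      simp
    have mp : ∀ j : ℕ, MeasurePreserving (fun w : ℕ → Ω => w j) P μ :=
      fun j => measurePreserving_eval_infinitePi (fun _ : ℕ => μ) j
    have idd : ∀ j : ℕ, ProbabilityTheory.IdentDistrib
        (fun w : ℕ → Ω => ∏ l, X (idx l) (w j)) (fun w : ℕ → Ω => ∏ l, X (idx l) (w 0)) P P := by
      intro j
      refine ⟨(mf.comp (mp j).measurable).aemeasurable, (mf.comp (mp 0).measurable).aemeasurable, ?_⟩
      have e : ∀ j, Measure.map (fun w : ℕ → Ω => ∏ l, X (idx l) (w j)) P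
          = Measure.map (fun ω => ∏ l, X (idx l) ω) μ := by
        intro j
        rw [← (mp j).map_eq, Measure.map_map mf (mp j).measurable]; rfl
      rw [e, e]
    have ind := ProbabilityTheory.iIndepFun_infinitePi (P := fun _ : ℕ => μ)
      (X := fun _ ω => ∏ l, X (idx l) ω) (fun _ => mf)
    have sl := ProbabilityTheory.strong_law_ae_real
      (fun (j : ℕ) (w : ℕ → Ω) => ∏ l, X (idx l) (w j)) (μ := P)
      ((mp 0).integrable_comp_of_integrable intf)
      (fun i j hij => ind.indepFun hij) idd
    have e0 : ∫ w, ∏ l, X (idx l) (w 0) ∂P = ∫ ω, ∏ l, X (idx l) ω ∂μ := by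
      rw [← (mp 0).map_eq, integral_map (mp 0).measurable.aemeasurable mf.aestronglyMeasurable]
    rw [e0] at sl
    exact sl
  obtain ⟨w, hw1, hw2⟩ := (hb.and hl).exists
  have ev : ∀ᶠ N : ℕ in atTop, ∀ (k : Fin (m + 1)) (idx : Fin k → Fin n),
      |(∑ j ∈ Finset.range N, ∏ l, X (idx l) (w j)) / N - ∫ ω, ∏ l, X (idx l) ω ∂μ| < δ := by
    rw [eventually_all]; intro k
    rw [eventually_all]; intro idx
    have := Metric.tendsto_nhds.1 (hw2 k idx) δ hδ
    simpa only [Real.dist_eq] using this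
  filter_upwards [ev] with N hN
  refine ⟨fun i j => X i (w j), fun i j => hw1 i j, fun k _ hk idx => ?_⟩
  have := hN ⟨k, by omega⟩ idx
  rw [← Fin.sum_univ_eq_sum_range (fun j => ∏ l, X (idx l) (w j)) N] at this
  exact this

lemma kappa_cont {N n : ℕ} (k : ℕ) (idx : Fin k → Fin n) :
    Continuous (fun x : Fin n → Fin N → ℝ => kappa (fun j => ∏ l, x (idx l) j)) := by
  unfold kappa; fun_prop

lemma deltaR_meas {Ω : Type*} [MeasurableSpace Ω] (μ : Measure Ω)
    {n : ℕ} (X : Fin n → Ω → ℝ) (R : ℝ) (N m : ℕ) (δ : ℝ) :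
    MeasurableSet (DeltaR μ X R N m δ) := by
  have : DeltaR μ X R N m δ = (⋂ i, ⋂ j, {x : Fin n → Fin N → ℝ | |x i j| ≤ R}) ∩
      ⋂ k : ℕ, ⋂ (_ : 1 ≤ k), ⋂ (_ : k ≤ m), ⋂ idx : Fin k → Fin n,
        {x | |kappa (fun j => ∏ l, x (idx l) j) - ∫ ω, ∏ l, X (idx l) ω ∂μ| < δ} := by
    ext x; simp [DeltaR]
  rw [this]
  refine MeasurableSet.inter ?_ ?_
  · refine MeasurableSet.iInter fun i => MeasurableSet.iInter fun j => ?_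
    exact measurableSet_le (by fun_prop) measurable_const
  · refine MeasurableSet.iInter fun k => MeasurableSet.iInter fun _ => MeasurableSet.iInter fun _ =>
      MeasurableSet.iInter fun idx => ?_
    refine IsOpen.measurableSet ?_
    exact isOpen_lt (((kappa_cont k idx).sub continuous_const).abs) continuous_const

lemma deltaR_finite {Ω : Type*} [MeasurableSpace Ω] (μ : Measure Ω)
    {n : ℕ} (X : Fin n → Ω → ℝ) (R : ℝ) (N m : ℕ) (δ : ℝ) :
    volume (DeltaR μ X R N m δ) < ⊤ := by
  have hsub : DeltaR μ X R N m δ ⊆ Set.pi Set.univ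
      (fun _ : Fin n => Set.pi Set.univ fun _ : Fin N => Set.Icc (-R) R) := by
    intro x hx i _ j _
    exact abs_le.1 (hx.1 i j)
  refine lt_of_le_of_lt (measure_mono hsub) ?_
  exact (isCompact_univ_pi fun _ => isCompact_univ_pi fun _ => isCompact_Icc).measure_lt_top

lemma deltaR_pos {Ω : Type*} [MeasurableSpace Ω] (μ : Measure Ω)
    {n : ℕ} (X : Fin n → Ω → ℝ) (R : ℝ) (hR : 0 < R) (N m : ℕ) (δ : ℝ)
    (hne : (DeltaR μ X R N m δ).Nonempty) :
    0 < volume (DeltaR μ X R N m δ) := by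
  set U : Set (Fin n → Fin N → ℝ) := {x | (∀ i j, |x i j| < R) ∧
    ∀ k : Fin (m + 1), ∀ idx : Fin k → Fin n, 1 ≤ (k : ℕ) →
      |kappa (fun j => ∏ l, x (idx l) j) - ∫ ω, ∏ l, X (idx l) ω ∂μ| < δ} with hU
  have hV : IsOpen {x : Fin n → Fin N → ℝ | ∀ k : Fin (m + 1), ∀ idx : Fin k → Fin n, 1 ≤ (k : ℕ) →
      |kappa (fun j => ∏ l, x (idx l) j) - ∫ ω, ∏ l, X (idx l) ω ∂μ| < δ} := by
    simp only [Set.ofPred_forall]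
    refine isOpen_iInter_of_finite fun k => isOpen_iInter_of_finite fun idx =>
      isOpen_iInter_of_finite fun _ => ?_
    exact isOpen_lt (((kappa_cont k idx).sub continuous_const).abs) continuous_const
  have hW : IsOpen {x : Fin n → Fin N → ℝ | ∀ i j, |x i j| < R} := by
    simp only [Set.ofPred_forall]
    refine isOpen_iInter_of_finite fun i => isOpen_iInter_of_finite fun j => ?_
    exact isOpen_lt (by fun_prop) continuous_const
  have hUo : IsOpen U := hW.inter hV
  have hsub : U ⊆ DeltaR μ X R N m δ := fun x hx =>
    ⟨fun i j => (hx.1 i j).le, fun k h1 h2 idx => hx.2 ⟨k, by omega⟩ idx h1⟩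
  obtain ⟨x, hx⟩ := hne
  have hUne : U.Nonempty := by
    have ht : Tendsto (fun c : ℝ => c • x) (nhdsWithin 1 (Set.Iio 1)) (nhds x) := by
      have : Continuous (fun c : ℝ => c • x) := by fun_prop
      have h := this.tendsto 1
      simp only [one_smul] at h
      exact h.mono_left nhdsWithin_le_nhds
    have h1 := ht.eventually (hV.mem_nhds
      (show x ∈ _ from fun k idx h1 => hx.2 k h1 (by omega) idx))
    have h2 : ∀ᶠ c : ℝ in nhdsWithin 1 (Set.Iio 1), c < 1 := self_mem_nhdsWithin
    have h3 : ∀ᶠ c : ℝ in nhdsWithin 1 (Set.Iio 1), 0 < c :=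
      nhdsWithin_le_nhds (lt_mem_nhds zero_lt_one)
    obtain ⟨c, hc1, hc2, hc3⟩ := (h1.and (h2.and h3)).exists
    refine ⟨c • x, fun i j => ?_, hc1⟩
    simp only [Pi.smul_apply, smul_eq_mul, abs_mul, abs_of_pos hc3]
    have := hx.1 i j
    nlinarith [abs_nonneg (x i j)]
  exact lt_of_lt_of_le (hUo.measure_pos volume hUne) (measure_mono hsub)

lemma kappa_perm {N : ℕ} (x : Fin N → ℝ) (τ : Equiv.Perm (Fin N)) :
    kappa (fun j => x (τ j)) = kappa x := by
  unfold kappa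
  rw [Equiv.sum_comp τ x]

lemma vol_perm {N : ℕ} (A : Set (Fin N → ℝ)) (τ : Equiv.Perm (Fin N)) :
    volume {w : Fin N → ℝ | (fun j => w (τ j)) ∈ A} = volume A := by
  have h := volume_measurePreserving_piCongrLeft (fun _ : Fin N => ℝ) τ.symm
  have e : {w : Fin N → ℝ | (fun j => w (τ j)) ∈ A}
      = (MeasurableEquiv.piCongrLeft (fun _ : Fin N => ℝ) τ.symm) ⁻¹' A := by
    ext w
    simp only [Set.mem_ofPred_eq, Set.mem_preimage]
    have : (MeasurableEquiv.piCongrLeft (fun _ : Fin N => ℝ) τ.symm) w = fun j => w (τ j) := by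
      ext j
      have := Equiv.piCongrLeft_apply_apply (fun _ : Fin N => ℝ) τ.symm w (τ j)
      rw [Equiv.symm_apply_apply] at this
      exact this
    rw [this]
  rw [e]
  exact h.measure_preimage_equiv A

lemma vol_eq_null {N : ℕ} (a b : Fin N) (hab : a ≠ b) :
    volume {w : Fin N → ℝ | w a = w b} = 0 := by
  set S : Submodule ℝ (Fin N → ℝ) :=
    LinearMap.ker (LinearMap.proj (R := ℝ) (φ := fun _ : Fin N => ℝ) a - LinearMap.proj b) with hS
  have hne : S ≠ ⊤ := by
    intro h
    have : Pi.single a (1 : ℝ) ∈ S := by rw [h]; trivial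
    simp [hS, hab.symm] at this
  have e : {w : Fin N → ℝ | w a = w b} = (S : Set (Fin N → ℝ)) := by
    ext w; simp [hS, sub_eq_zero]
  rw [e]
  exact Measure.addHaar_submodule volume S hne

/-- the strictly increasing one-variable microstates -/
def monoA {Ω : Type*} [MeasurableSpace Ω] (μ : Measure Ω)
    (Y : Ω → ℝ) (R : ℝ) (N m : ℕ) (δ : ℝ) : Set (Fin N → ℝ) :=
  {y | StrictMono y ∧ (fun _ : Fin 1 => y) ∈ DeltaR μ (fun _ : Fin 1 => Y) R N m δ}

lemma vol_le_monoA {Ω : Type*} [MeasurableSpace Ω] (μ : Measure Ω)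
    (Y : Ω → ℝ) (R : ℝ) (N m : ℕ) (δ : ℝ) :
    volume (DeltaR μ (fun _ : Fin 1 => Y) R N m δ)
      ≤ (N.factorial : ℝ≥0∞) * volume (monoA μ Y R N m δ) := by
  set B : Set (Fin N → ℝ) :=
    {y | (fun _ : Fin 1 => y) ∈ DeltaR μ (fun _ : Fin 1 => Y) R N m δ} with hB
  have e1 : volume (DeltaR μ (fun _ : Fin 1 => Y) R N m δ) = volume B := by
    have h := volume_preserving_funUnique (Fin 1) (Fin N → ℝ)
    rw [← h.measure_preimage_equiv B]
    congr 1
    ext x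
    simp only [Set.mem_preimage, hB, Set.mem_ofPred_eq]
    have : (fun _ : Fin 1 => (MeasurableEquiv.funUnique (Fin 1) (Fin N → ℝ)) x) = x := by
      ext i j
      have : i = default := Subsingleton.elim _ _
      rw [this]; rfl
    rw [this]
  have hinv : ∀ (y : Fin N → ℝ) (τ : Equiv.Perm (Fin N)), y ∈ B → (fun j => y (τ j)) ∈ B := by
    intro y τ hy
    refine ⟨fun i j => hy.1 i (τ j), fun k h1 h2 idx => ?_⟩
    have := hy.2 k h1 h2 idx
    rw [← kappa_perm _ τ] at this
    exact this
  have hsub : B ⊆ (⋃ p : {p : Fin N × Fin N // p.1 ≠ p.2}, {w : Fin N → ℝ | w p.1.1 = w p.1.2}) ∪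
      ⋃ τ : Equiv.Perm (Fin N), {w | (fun j => w (τ j)) ∈ monoA μ Y R N m δ} := by
    intro y hy
    by_cases hi : Function.Injective y
    · right
      refine Set.mem_iUnion.2 ⟨Tuple.sort y, ?_, hinv y _ hy⟩
      exact (Tuple.monotone_sort y).strictMono_of_injective (hi.comp (Tuple.sort y).injective)
    · left
      simp only [Function.Injective, not_forall] at hi
      obtain ⟨a, b, h1, h2⟩ := hi
      exact Set.mem_iUnion.2 ⟨⟨(a, b), h2⟩, h1⟩
  rw [e1]
  refine (measure_mono hsub).trans ((measure_union_le _ _).trans ?_)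
  rw [measure_iUnion_null (fun p => vol_eq_null _ _ p.2), zero_add]
  refine (measure_iUnion_le _).trans ?_
  simp only [vol_perm, tsum_fintype, Finset.sum_const, Finset.card_univ, Fintype.card_perm,
    Fintype.card_fin, nsmul_eq_mul, le_refl]

lemma monoA_meas {Ω : Type*} [MeasurableSpace Ω] (μ : Measure Ω)
    (Y : Ω → ℝ) (R : ℝ) (N m : ℕ) (δ : ℝ) : MeasurableSet (monoA μ Y R N m δ) := by
  refine MeasurableSet.inter ?_ ?_
  · have : {y : Fin N → ℝ | StrictMono y} = ⋂ a, ⋂ b, ⋂ (_ : a < b), {y | y a < y b} := by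
      ext y; simp [StrictMono]
    change MeasurableSet {y : Fin N → ℝ | StrictMono y}
    rw [this]
    refine MeasurableSet.iInter fun a => MeasurableSet.iInter fun b => MeasurableSet.iInter fun _ => ?_
    exact measurableSet_lt (by fun_prop) (by fun_prop)
  · have : Measurable (fun (y : Fin N → ℝ) (_ : Fin 1) => y) := by fun_prop
    exact this (deltaR_meas μ (fun _ : Fin 1 => Y) R N m δ)

lemma strictMono_perm {N : ℕ} (w : Fin N → ℝ) (σ τ : Equiv.Perm (Fin N))
    (h1 : StrictMono fun j => w (σ j)) (h2 : StrictMono fun j => w (τ j)) : σ = τ := by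
  have hm : StrictMono (fun j => τ⁻¹ (σ j)) := by
    intro a b hab
    have := h1 hab
    rw [← h2.lt_iff_lt]
    simpa using this
  have hr : (fun j => τ⁻¹ (σ j)) = id := by
    have := Subsingleton.elim (StrictMono.orderIsoOfSurjective _ hm (τ⁻¹ * σ).surjective)
      (OrderIso.refl (Fin N))
    ext j
    have h := congrArg (fun f : Fin N ≃o Fin N => ((f j : Fin N) : ℕ)) this
    simpa using h
  ext j
  have := congrFun hr j
  simp only [id] at this
  rw [Equiv.Perm.inv_eq_iff_eq] at this
  rw [this]

lemma vol_key {Ω : Type*} [MeasurableSpace Ω] (μ : Measure Ω)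
    {n : ℕ} (X : Fin n → Ω → ℝ) (R : ℝ) (N m m' : ℕ) (δ δ' : ℝ)
    (hin : ∀ σ ∈ DeltaSymR μ X R N m' δ', ∀ y : Fin n → Fin N → ℝ,
      (∀ i, y i ∈ monoA μ (X i) R N m' δ') →
      (fun i j => y i ((σ i)⁻¹ j)) ∈ DeltaR μ X R N m δ) :
    (Nat.card (DeltaSymR μ X R N m' δ') : ℝ≥0∞) * ∏ i, volume (monoA μ (X i) R N m' δ')
      ≤ volume (DeltaR μ X R N m δ) := by
  set C : (Fin n → Equiv.Perm (Fin N)) → Set (Fin n → Fin N → ℝ) := fun σ =>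
    Set.pi Set.univ fun i => {w | (fun j => w (σ i j)) ∈ monoA μ (X i) R N m' δ'} with hC
  have hCm : ∀ σ, MeasurableSet (C σ) := by
    intro σ
    refine MeasurableSet.univ_pi fun i => ?_
    have : Measurable (fun (w : Fin N → ℝ) j => w (σ i j)) := by fun_prop
    exact this (monoA_meas μ _ R N m' δ')
  have hCv : ∀ σ, volume (C σ) = ∏ i, volume (monoA μ (X i) R N m' δ') := by
    intro σ
    rw [hC, volume_pi_pi]
    exact Finset.prod_congr rfl fun i _ => vol_perm _ _
  have hd : Pairwise (Function.onFun Disjoint fun σ : DeltaSymR μ X R N m' δ' => C σ.1) := by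
    intro σ τ hne
    rw [Function.onFun, Set.disjoint_left]
    intro w h1 h2
    apply hne
    apply Subtype.ext
    funext i
    exact strictMono_perm (w i) _ _ (h1 i trivial).1 (h2 i trivial).1
  have hsub : (⋃ σ : DeltaSymR μ X R N m' δ', C σ.1) ⊆ DeltaR μ X R N m δ := by
    intro w hw
    obtain ⟨σ, hσ⟩ := Set.mem_iUnion.1 hw
    have := hin σ.1 σ.2 (fun i j => w i (σ.1 i j)) (fun i => hσ i trivial)
    simpa using this
  refine le_trans (le_of_eq ?_) (measure_mono hsub)
  rw [measure_iUnion hd (fun σ => hCm _), tsum_fintype]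
  simp only [hCv, Finset.sum_const, Finset.card_univ, nsmul_eq_mul, Nat.card_eq_fintype_card]

lemma sym_nonempty {Ω : Type*} [MeasurableSpace Ω] (μ : Measure Ω)
    {n : ℕ} (X : Fin n → Ω → ℝ) (R : ℝ) (N m : ℕ) (δ : ℝ)
    (h : (DeltaR μ X R N m δ).Nonempty) : (DeltaSymR μ X R N m δ).Nonempty := by
  obtain ⟨x, hx⟩ := h
  refine ⟨fun i => Tuple.sort (x i), fun i => x i ∘ Tuple.sort (x i),
    fun i => Tuple.monotone_sort _, ?_⟩
  simpa using hx

lemma transfer {Ω : Type*} [MeasurableSpace Ω] (μ : Measure Ω)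
    {n : ℕ} (X : Fin n → Ω → ℝ) (R : ℝ) (m : ℕ) (δ : ℝ) (hδ : 0 < δ) :
    ∃ m' : ℕ, ∃ δ' : ℝ, 0 < δ' ∧ ∀ N : ℕ, 0 < N →
      ∀ σ ∈ DeltaSymR μ X R N m' δ', ∀ y : Fin n → Fin N → ℝ,
      (∀ i, y i ∈ monoA μ (X i) R N m' δ') →
      (fun i j => y i ((σ i)⁻¹ j)) ∈ DeltaR μ X R N m δ := by
  set C : ℝ := max R 1 with hC
  have hC1 : 1 ≤ C := le_max_right _ _
  have hC0 : 0 ≤ C := by linarith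
  set η : ℝ := δ / 2 / (C ^ m * m + 1) with hη
  have hη0 : 0 < η := by positivity
  obtain ⟨m0, d, hd, hv⟩ := voic R η hη0
  refine ⟨max m m0, min (δ / 2) (d / 2), by positivity, fun N hN σ hσ y hy => ?_⟩
  obtain ⟨x, hxm, hx⟩ := hσ
  have hN' : (0 : ℝ) < N := by exact_mod_cast hN
  have hxR : ∀ i j, |x i j| ≤ R := by
    intro i j
    have := hx.1 i (σ i j)
    simpa using this
  have hyR : ∀ i j, |y i j| ≤ R := fun i j => (hy i).2.1 0 j
  have close : ∀ i, ∑ j, |x i j - y i j| ≤ η * N := by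
    intro i
    refine hv N (x i) (y i) (hxm i) (hy i).1.monotone (hxR i) (hyR i) fun k h1 h2 => ?_
    have a := hx.2 k h1 (h2.trans (le_max_right _ _)) (fun _ => i)
    have b := (hy i).2.2 k h1 (h2.trans (le_max_right _ _)) (fun _ => 0)
    simp only [Finset.prod_const, Finset.card_univ, Fintype.card_fin] at a b
    rw [kappa_perm (fun j => x i j ^ k) ((σ i)⁻¹)] at a
    have hm2 : min (δ / 2) (d / 2) ≤ d / 2 := min_le_right _ _
    have e : ∀ z : Fin N → ℝ, ∑ j, z j = kappa z * N := by
      intro z; unfold kappa; field_simp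
    rw [e, e, ← sub_mul, abs_mul, abs_of_pos hN']
    refine mul_le_mul_of_nonneg_right ?_ hN'.le
    have a' := abs_lt.1 a
    have b' := abs_lt.1 b
    rw [abs_le]; constructor <;> linarith [a'.1, a'.2, b'.1, b'.2]
  refine ⟨fun i j => hyR i _, fun k h1 h2 idx => ?_⟩
  have a := hx.2 k h1 (h2.trans (le_max_left _ _)) idx
  have a2 := a.trans_le (min_le_left _ _)
  have diff : |kappa (fun j => ∏ l, y (idx l) ((σ (idx l))⁻¹ j))
      - kappa (fun j => ∏ l, x (idx l) ((σ (idx l))⁻¹ j))| ≤ δ / 2 := by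
    unfold kappa
    rw [← sub_div, ← Finset.sum_sub_distrib, abs_div, abs_of_pos hN', div_le_iff₀ hN']
    refine (Finset.abs_sum_le_sum_abs _ _).trans ?_
    calc _ ≤ ∑ j : Fin N, C ^ k * ∑ l, |y (idx l) ((σ (idx l))⁻¹ j) - x (idx l) ((σ (idx l))⁻¹ j)| := by
          refine Finset.sum_le_sum fun j _ => ?_
          have := prod_lip Finset.univ C hC1 (fun l => y (idx l) ((σ (idx l))⁻¹ j))
            (fun l => x (idx l) ((σ (idx l))⁻¹ j)) (fun l => (hyR _ _).trans (le_max_left _ _))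
            (fun l => (hxR _ _).trans (le_max_left _ _))
          simpa using this
      _ = C ^ k * ∑ l, ∑ j, |x (idx l) j - y (idx l) j| := by
          rw [← Finset.mul_sum, Finset.sum_comm]
          congr 1
          refine Finset.sum_congr rfl fun l _ => ?_
          rw [Equiv.sum_comp (σ (idx l))⁻¹ (fun j => |y (idx l) j - x (idx l) j|)]
          exact Finset.sum_congr rfl fun j _ => abs_sub_comm _ _
      _ ≤ C ^ k * ∑ l : Fin k, η * N := by
          gcongr with l
          exact close _
      _ = (C ^ k * k) * η * N := by simp; ring
      _ ≤ (C ^ m * m) * η * N := by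
          gcongr
      _ ≤ δ / 2 * N := by
          refine mul_le_mul_of_nonneg_right ?_ hN'.le
          have h0 : 0 ≤ C ^ m * m := by positivity
          rw [hη, mul_div_assoc', div_le_iff₀ (by positivity)]
          nlinarith
  have a' := abs_lt.1 a2
  have b' := abs_le.1 diff
  rw [abs_lt]; constructor <;> linarith [a'.1, a'.2, b'.1, b'.2]

lemma log_key {Ω : Type*} [MeasurableSpace Ω] (μ : Measure Ω)
    {n : ℕ} (X : Fin n → Ω → ℝ) (R : ℝ) (N m m' : ℕ) (δ δ' : ℝ)
    (hin : ∀ σ ∈ DeltaSymR μ X R N m' δ', ∀ y : Fin n → Fin N → ℝ,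
      (∀ i, y i ∈ monoA μ (X i) R N m' δ') →
      (fun i j => y i ((σ i)⁻¹ j)) ∈ DeltaR μ X R N m δ)
    (hs : (DeltaSymR μ X R N m' δ').Nonempty)
    (hB : ∀ i, 0 < volume (DeltaR μ (fun _ : Fin 1 => X i) R N m' δ')) :
    symQ μ X R N m' δ' + ∑ i, volQ μ (fun _ : Fin 1 => X i) R N m' δ' ≤ volQ μ X R N m δ := by
  have h1 := vol_key μ X R N m m' δ δ' hin
  have h2 : (Nat.card (DeltaSymR μ X R N m' δ') : ℝ≥0∞)
      * ∏ i, volume (DeltaR μ (fun _ : Fin 1 => X i) R N m' δ')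
      ≤ (N.factorial : ℝ≥0∞) ^ n * volume (DeltaR μ X R N m δ) := by
    calc _ ≤ (Nat.card (DeltaSymR μ X R N m' δ') : ℝ≥0∞)
          * ∏ i, ((N.factorial : ℝ≥0∞) * volume (monoA μ (X i) R N m' δ')) := by
          gcongr with i
          exact vol_le_monoA μ (X i) R N m' δ'
      _ = (N.factorial : ℝ≥0∞) ^ n * ((Nat.card (DeltaSymR μ X R N m' δ') : ℝ≥0∞)
          * ∏ i, volume (monoA μ (X i) R N m' δ')) := by
          rw [Finset.prod_mul_distrib]; simp only [Finset.prod_const, Finset.card_univ,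
            Fintype.card_fin]; ring
      _ ≤ _ := by gcongr
  have hfin : (N.factorial : ℝ≥0∞) ^ n * volume (DeltaR μ X R N m δ) ≠ ⊤ :=
    ENNReal.mul_ne_top (by simp) (deltaR_finite μ X R N m δ).ne
  have h3 := ENNReal.toReal_mono hfin h2
  simp only [ENNReal.toReal_mul, ENNReal.toReal_natCast, ENNReal.toReal_prod,
    ENNReal.toReal_pow] at h3
  haveI : Nonempty (DeltaSymR μ X R N m' δ') := hs.to_subtype
  have hc : 0 < (Nat.card (DeltaSymR μ X R N m' δ') : ℝ) := by
    exact_mod_cast Nat.card_pos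
  have hf : (0 : ℝ) < (N.factorial : ℝ) ^ n := by positivity
  have hb : ∀ i, 0 < (volume (DeltaR μ (fun _ : Fin 1 => X i) R N m' δ')).toReal :=
    fun i => ENNReal.toReal_pos (hB i).ne' (deltaR_finite _ _ _ _ _ _).ne
  have hp := Finset.prod_pos fun i (_ : i ∈ Finset.univ) => hb i
  unfold symQ volQ
  rw [← Finset.sum_div, ← add_div]
  refine div_le_div_of_nonneg_right ?_ (by positivity)
  rw [← Real.log_prod (fun i _ => (hb i).ne'), ← Real.log_mul (by positivity) hp.ne']
  refine Real.log_le_log (by positivity) ?_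
  rw [div_mul_eq_mul_div, div_le_iff₀ hf]
  linarith

lemma sum_liminf_le {n : ℕ} (u : Fin n → ℕ → EReal) (s : Finset (Fin n)) :
    ∑ i ∈ s, liminf (u i) atTop ≤ liminf (fun N => ∑ i ∈ s, u i N) atTop := by
  induction s using Finset.induction_on with
  | empty => simp
  | insert i s hi ih =>
    simp only [Finset.sum_insert hi]
    exact (add_le_add le_rfl ih).trans EReal.le_liminf_add

lemma entropy_bot {Ω : Type*} [MeasurableSpace Ω] (μ : Measure Ω)
    [IsProbabilityMeasure μ] (Y : Ω → ℝ) (hY : Measurable Y) (h0 : ∀ᵐ ω ∂μ, |Y ω| ≤ 0) :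
    diffEntropy volume (Measure.map (fun ω (_ : Fin 1) => Y ω) μ) = ⊥ := by
  unfold diffEntropy
  rw [if_neg]
  intro hac
  have hm : Measurable (fun ω (_ : Fin 1) => Y ω) := by fun_prop
  have := hac (show volume ({fun _ => 0} : Set (Fin 1 → ℝ)) = 0 by simp)
  rw [Measure.map_apply hm (measurableSet_singleton _)] at this
  have h1 : ∀ᵐ ω ∂μ, ω ∈ (fun ω (_ : Fin 1) => Y ω) ⁻¹' {fun _ => 0} := by
    filter_upwards [h0] with ω hω
    simp only [Set.mem_preimage, Set.mem_singleton_iff]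
    funext _
    simpa using hω
  have h2 : ∀ᵐ ω ∂μ, False := by
    filter_upwards [h1, measure_eq_zero_iff_ae_notMem.1 this] with ω a b
    exact b a
  simpa using h2.exists

/-- Inequality (1.4): `∑ᵢ H(Xᵢ) - I_sym(X₁,…,Xₙ) ≤ H(X₁,…,Xₙ)` for bounded
random variables and `R ≥ maxᵢ ‖Xᵢ‖_∞`. -/
theorem stmt9 {Ω : Type*} [MeasurableSpace Ω] (μ : Measure Ω)
    [IsProbabilityMeasure μ] (n : ℕ) (X : Fin n → Ω → ℝ)
    (hmeas : ∀ i, Measurable (X i)) (R : ℝ)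
    (hbdd : ∀ i, ∀ᵐ ω ∂μ, |X i ω| ≤ R)
    (hvol : MicrostateVolumeFormula μ X R)
    (hvoli : ∀ i, MicrostateVolumeFormula μ (fun _ : Fin 1 => X i) R) :
    (∑ i, diffEntropy volume (Measure.map (fun ω (_ : Fin 1) => X i ω) μ))
        - Isym μ X R
      ≤ diffEntropy volume (Measure.map (fun ω (i : Fin n) => X i ω) μ) := by
  by_cases hbot : ∃ i, diffEntropy volume (Measure.map (fun ω (_ : Fin 1) => X i ω) μ) = ⊥
  · obtain ⟨i, hi⟩ := hbot
    rw [← Finset.add_sum_erase _ _ (Finset.mem_univ i), hi]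
    simp
  have hR : ∀ _ : Fin n, 0 < R := by
    intro i
    by_contra hR
    refine hbot ⟨i, entropy_bot μ (X i) (hmeas i) ?_⟩
    filter_upwards [hbdd i] with ω hω
    linarith
  rw [hvol.1]
  refine le_iInf fun m => le_iInf fun δ => le_iInf fun hδ => ?_
  obtain ⟨m', δ', hδ', htr⟩ := transfer μ X R m δ hδ
  have hI : -Isym μ X R ≤ limsup (fun N : ℕ => ((symQ μ X R N m' δ' : ℝ) : EReal)) atTop := by
    unfold Isym
    rw [neg_neg]
    exact (iInf_le _ m').trans ((iInf_le _ δ').trans (iInf_le _ hδ'))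
  have hH : ∀ i, diffEntropy volume (Measure.map (fun ω (_ : Fin 1) => X i ω) μ)
      ≤ liminf (fun N : ℕ => ((volQ μ (fun _ : Fin 1 => X i) R N m' δ' : ℝ) : EReal)) atTop := by
    intro i
    rw [(hvoli i).2]
    exact (iInf_le _ m').trans ((iInf_le _ δ').trans (iInf_le _ hδ'))
  have hsum := (Finset.sum_le_sum fun i (_ : i ∈ Finset.univ) => hH i).trans
    (sum_liminf_le (fun i N => ((volQ μ (fun _ : Fin 1 => X i) R N m' δ' : ℝ) : EReal)) Finset.univ)
  rw [sub_eq_add_neg, add_comm]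
  refine (add_le_add hI hsum).trans (EReal.le_limsup_add.trans ?_)
  refine limsup_le_limsup ?_
  have e2 : ∀ᶠ N in atTop, ∀ i, (DeltaR μ (fun _ : Fin 1 => X i) R N m' δ').Nonempty := by
    rw [eventually_all]
    intro i
    exact deltaR_nonempty_ev μ (fun _ : Fin 1 => X i) (fun _ => hmeas i) R (fun _ => hbdd i) m' δ' hδ'
  filter_upwards [deltaR_nonempty_ev μ X hmeas R hbdd m' δ' hδ', e2, eventually_gt_atTop 0]
    with N h1 h2 h3
  have := log_key μ X R N m m' δ δ' (htr N h3) (sym_nonempty μ X R N m' δ' h1)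
    (fun i => deltaR_pos μ _ R (hR i) N m' δ' (h2 i))
  have h := EReal.coe_le_coe_iff.2 this
  have cs : ∀ f : Fin n → ℝ, ((∑ i, f i : ℝ) : EReal) = ∑ i, ((f i : ℝ) : EReal) := by
    intro f
    exact map_sum (⟨⟨fun r : ℝ => (r : EReal), rfl⟩, EReal.coe_add⟩ : ℝ →+ EReal) f Finset.univ
  rw [EReal.coe_add, cs] at h
  exact h
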